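/- Let n ≥ 1, μ ≥ 1, N ≥ 0, T ≥ 1. Let d_μ(k), k ≥ 0, be defined by the power series identity Σ_{k=0}^{∞} d_μ(k) x^k = (Σ_{j=0}^{∞} x^{μj})^n. Given vectors a(0), …, a(N) ∈ ℂ^T, define b(k) = Σ_{m=k}^{N} d_μ(m − k) · a(m) for 0 ≤ k ≤ N, and for −μn ≤ k ≤ −1 define v(k) = Σ_{l} (−1)^l C(n,l) b(lμ + k), where the sum is over integers l with 0 ≤ l ≤ n and 0 ≤ lμ + k ≤ N. Then for every sequence ζ : ℤ → ℂ^T one has Σ_{k=0}^{N} a(k)ᵀ ζ(k) = Σ_{k=0}^{N} b(k)ᵀ ζ^{(n)}(k, μ) − Σ_{k=−μn}^{−1} v(k)ᵀ ζ(k), where ζ^{(n)}(k, μ) = Σ_{l=0}^{n} (−1)^l C(n,l) ζ(k − lμ) and xᵀy denotes the bilinear (non-conjugated) dot product on ℂ^T. -/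

import Mathlib

/-!
Write `S` for the forward shift on sequences that vanish beyond `N`. Then `b = D(S) a` with
`D = (∑ X ^ (μ j)) ^ n = (1 - X ^ μ) ^ (-n)`, so `a = (1 - S ^ μ) ^ n b`. Summation by parts moves
the `n`-th increment from `ζ` onto `b`, where it becomes `(1 - S ^ μ) ^ n`; the terms with index
`k ≥ 0` therefore add up to the functional of `a`, and those with index `k < 0` are the boundary
terms `v k`.
-/

open Finset PowerSeries

section Reindexing

variable {P : Type*} [AddCommMonoid P]

theorem sum_range_sub_eq_sum_Ico_filter (N : ℕ) {p q : ℤ} (hp : 0 ≤ p) (hpq : p ≤ q)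
    (F : ℕ → ℤ → P) :
    ∑ k ∈ range (N + 1), F k (k - p) =
      ∑ j ∈ (Ico (-q) (N + 1)).filter (fun j => 0 ≤ p + j ∧ p + j ≤ N), F (p + j).toNat j := by
  refine sum_bij' (fun k _ => (k : ℤ) - p) (fun j _ => (p + j).toNat) ?_ ?_ ?_ ?_ ?_ <;>
    simp only [mem_range, mem_filter, mem_Ico] <;> grind

theorem sum_Ico_eq_sum_Ico_zero_add_sum_range (F : ℤ → P) {q : ℤ} (hq : 0 ≤ q) (N : ℕ) :
    ∑ j ∈ Ico (-q) N, F j = ∑ j ∈ Ico (-q) 0, F j + ∑ k ∈ range N, F k := by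
  rw [← Ico_union_Ico_eq_Ico (neg_nonpos.mpr hq) (Int.natCast_nonneg N),
    sum_union (Ico_disjoint_Ico_consecutive _ _ _)]
  congr 1
  refine sum_bij' (fun j _ => j.toNat) (fun k _ => (k : ℤ)) ?_ ?_ ?_ ?_ ?_ <;>
    simp only [mem_range, mem_Ico] <;> grind

end Reindexing

section Series

theorem one_sub_pow_eq_sum_smul (R : Type*) {A : Type*} [CommRing R] [Ring A] [Algebra R A]
    (x : A) (n : ℕ) :
    (1 - x) ^ n = ∑ l ∈ range (n + 1), ((-1 : R) ^ l * (n.choose l : R)) • x ^ l := by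
  rw [sub_eq_neg_add, (Commute.one_right (-x)).add_pow]
  refine sum_congr rfl fun l _ => ?_
  simp [Algebra.smul_def, neg_pow x, mul_assoc, Nat.cast_comm]

theorem one_sub_X_pow_mul_mk_dvd {R : Type*} [CommRing R] {p : ℕ} (hp : p ≠ 0) :
    (1 - X ^ p : R⟦X⟧) * PowerSeries.mk (fun j => if p ∣ j then 1 else 0) = 1 := by
  have h_expand : PowerSeries.mk (fun j => if p ∣ j then (1 : R) else 0) =
      expand p hp (PowerSeries.mk 1) := by
    ext j
    simp [coeff_expand]
  rw [h_expand, ← expand_X p hp, ← map_one (expand p hp), ← map_sub, ← map_mul, mul_comm,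
    mk_one_mul_one_sub_eq_one]

theorem coeff_mul_eq_sum_Icc {R : Type*} [Semiring R] (f g : R⟦X⟧) {k p : ℕ} (hkp : k ≤ p) :
    coeff (p - k) (f * g) = ∑ m ∈ Icc k p, coeff (m - k) f * coeff (p - m) g := by
  rw [coeff_mul, Nat.sum_antidiagonal_eq_sum_range_succ_mk, ← Ico_add_one_right_eq_Icc,
    sum_Ico_eq_sum_range, Nat.succ_eq_add_one, Nat.sub_add_comm hkp]
  simp [Nat.sub_sub]

end Series

section Toeplitz

variable {R M : Type*} [Semiring R] [AddCommMonoid M] [Module R M]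

/-- The upper triangular Toeplitz operator with symbol `f`, truncated at `N`: the matrix with entry
`coeff (m - k) f` in position `(k, m)` for `k ≤ m ≤ N`, applied to `a`. The matrix `D^μ_N` of the
paper is the one with symbol `(∑ X ^ (μ j)) ^ n`. It is bundled as a linear function of the
symbol. -/
noncomputable def toeplitz (N : ℕ) (a : ℕ → M) (k : ℕ) : R⟦X⟧ →ₗ[R] M where
  toFun f := ∑ m ∈ Icc k N, coeff (m - k) f • a m
  map_add' f g := by simp [add_smul, sum_add_distrib]
  map_smul' r f := by simp [mul_smul, smul_sum]

theorem toeplitz_apply (N : ℕ) (a : ℕ → M) (k : ℕ) (f : R⟦X⟧) :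
    toeplitz N a k f = ∑ m ∈ Icc k N, coeff (m - k) f • a m :=
  rfl

theorem toeplitz_X_pow (N : ℕ) (a : ℕ → M) (k p : ℕ) :
    toeplitz N a k (X ^ p : R⟦X⟧) = if p + k ≤ N then a (p + k) else 0 := by
  have h_coeff : ∀ m ∈ Icc k N,
      coeff (m - k) (X ^ p : R⟦X⟧) • a m = if p + k = m then a m else 0 := by
    intro m hm
    have h_iff : m - k = p ↔ p + k = m := by grind
    simp [coeff_X_pow, h_iff]
  rw [toeplitz_apply, sum_congr rfl h_coeff, sum_ite_eq]
  simp

theorem toeplitz_mul (N : ℕ) (a : ℕ → M) (k : ℕ) (f g : R⟦X⟧) :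
    toeplitz N a k (f * g) = toeplitz N (fun m => toeplitz N a m g) k f := by
  simp only [toeplitz_apply, smul_sum, smul_smul]
  rw [sum_comm' (t' := Icc k N) (s' := fun p => Icc k p) (by grind)]
  refine sum_congr rfl fun p hp => ?_
  rw [coeff_mul_eq_sum_Icc f g (mem_Icc.mp hp).1, sum_smul]

theorem toeplitz_eq_of_mul_eq_one {N : ℕ} {a b : ℕ → M} {f g : R⟦X⟧} (hfg : f * g = 1)
    (hb : ∀ k ≤ N, b k = toeplitz N a k g) {k : ℕ} (hk : k ≤ N) :
    toeplitz N b k f = a k := calc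
  toeplitz N b k f = toeplitz N (fun m => toeplitz N a m g) k f :=
    sum_congr rfl fun m hm => congrArg _ (hb m (mem_Icc.mp hm).2)
  _ = toeplitz N a k (X ^ 0 : R⟦X⟧) := by rw [← toeplitz_mul, hfg, pow_zero]
  _ = a k := by rw [toeplitz_X_pow, zero_add, if_pos hk]

end Toeplitz

section Increment

variable {R M E P : Type*} [CommRing R] [AddCommMonoid M] [Module R M] [AddCommMonoid E]
  [Module R E]

variable (R) in
/-- The `n`-th increment `ζ^{(n)}(k, μ)` with step `μ` of a two-sided sequence. -/
def increment (n μ : ℕ) (ζ : ℤ → E) (k : ℤ) : E :=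
  ∑ l ∈ range (n + 1), ((-1 : R) ^ l * (n.choose l : R)) • ζ (k - (l : ℤ) * μ)

variable (R) in
/-- The transpose of `increment`, applied to a sequence `b` supported on `0, …, N`: the filter
discards the terms outside the support, so that `Int.toNat` never truncates. At `-μn ≤ k ≤ -1` it
is the `v k` of the paper. -/
def incrementTranspose (n μ N : ℕ) (b : ℕ → M) (k : ℤ) : M :=
  ∑ l ∈ (range (n + 1)).filter
      (fun l : ℕ => 0 ≤ (l : ℤ) * μ + k ∧ (l : ℤ) * μ + k ≤ (N : ℤ)),
    ((-1 : R) ^ l * (n.choose l : R)) • b ((l : ℤ) * μ + k).toNat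

theorem incrementTranspose_natCast (n μ N : ℕ) (b : ℕ → M) (k : ℕ) :
    incrementTranspose R n μ N b k = toeplitz N b k ((1 - X ^ μ : R⟦X⟧) ^ n) := by
  rw [one_sub_pow_eq_sum_smul R, map_sum, incrementTranspose, sum_filter]
  refine sum_congr rfl fun l _ => ?_
  have h_cast : (l : ℤ) * μ + k = ((l * μ + k : ℕ) : ℤ) := by push_cast; rfl
  rw [map_smul, ← pow_mul, mul_comm μ l, toeplitz_X_pow, h_cast, Int.toNat_natCast, smul_ite,
    smul_zero]
  simp only [Int.natCast_nonneg, Nat.cast_le, true_and]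

theorem incrementTranspose_eq_of_toeplitz {n μ N : ℕ} (hμ : μ ≠ 0) {a b : ℕ → M}
    (hb : ∀ k ≤ N, b k =
      toeplitz N a k ((PowerSeries.mk fun j => if μ ∣ j then (1 : R) else 0) ^ n))
    {k : ℕ} (hk : k ≤ N) :
    incrementTranspose R n μ N b k = a k := by
  rw [incrementTranspose_natCast]
  refine toeplitz_eq_of_mul_eq_one ?_ hb hk
  rw [← mul_pow, one_sub_X_pow_mul_mk_dvd hμ, one_pow]

theorem sum_increment_eq_sum_incrementTranspose [AddCommMonoid P] [Module R P]
    (B : M →ₗ[R] E →ₗ[R] P) (n μ N : ℕ) (b : ℕ → M) (ζ : ℤ → E) :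
    ∑ k ∈ range (N + 1), B (b k) (increment R n μ ζ k) =
      ∑ j ∈ Ico (-((μ : ℤ) * n)) (N + 1), B (incrementTranspose R n μ N b j) (ζ j) := by
  have h_lag : ∀ l ∈ range (n + 1), (l : ℤ) * μ ≤ μ * n := by
    intro l hl
    rw [mul_comm]
    gcongr
    grind
  simp only [increment, incrementTranspose, map_sum, map_smul, LinearMap.sum_apply,
    LinearMap.smul_apply]
  rw [sum_comm, sum_congr rfl fun l hl => sum_range_sub_eq_sum_Ico_filter N (by positivity)
    (h_lag l hl) fun k j => ((-1 : R) ^ l * (n.choose l : R)) • B (b k) (ζ j)]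
  exact sum_comm' (by grind)

theorem functional_decomposition_general [AddCommGroup P] [Module R P] (B : M →ₗ[R] E →ₗ[R] P)
    {n μ N : ℕ} (hμ : μ ≠ 0) {d : ℕ → R}
    (hd : PowerSeries.mk d = (PowerSeries.mk fun j => if μ ∣ j then (1 : R) else 0) ^ n)
    {a b : ℕ → M} (hb : ∀ k ≤ N, b k = ∑ m ∈ Icc k N, d (m - k) • a m)
    {v : ℤ → M} (hv : ∀ k : ℤ, -((μ : ℤ) * n) ≤ k → k ≤ -1 → v k = incrementTranspose R n μ N b k)
    (ζ : ℤ → E) :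
    ∑ k ∈ range (N + 1), B (a k) (ζ k) =
      ∑ k ∈ range (N + 1), B (b k) (increment R n μ ζ k) -
        ∑ k ∈ Ico (-((μ : ℤ) * n)) 0, B (v k) (ζ k) := by
  have hb_toeplitz : ∀ k ≤ N, b k =
      toeplitz N a k ((PowerSeries.mk fun j => if μ ∣ j then (1 : R) else 0) ^ n) := by
    intro k hk
    simp only [hb k hk, ← hd, toeplitz_apply, coeff_mk]
  have h_initial : ∑ k ∈ Ico (-((μ : ℤ) * n)) 0, B (v k) (ζ k) =
      ∑ k ∈ Ico (-((μ : ℤ) * n)) 0, B (incrementTranspose R n μ N b k) (ζ k) :=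
    sum_congr rfl fun k hk => by rw [hv k (by grind) (by grind)]
  have h_main : ∑ k ∈ range (N + 1), B (a k) (ζ k) =
      ∑ k ∈ range (N + 1), B (incrementTranspose R n μ N b k) (ζ k) :=
    sum_congr rfl fun k hk => by
      rw [incrementTranspose_eq_of_toeplitz hμ hb_toeplitz (mem_range_succ_iff.mp hk)]
  rw [h_initial, h_main, sum_increment_eq_sum_incrementTranspose, ← Nat.cast_succ,
    sum_Ico_eq_sum_Ico_zero_add_sum_range _ (by positivity), add_sub_cancel_left]

end Increment

/-- Lemma 3.1, pathwise: with `d_μ` defined by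
`Σ_{k≥0} d_μ(k) x^k = (Σ_{j≥0} x^{μj})^n`, `b(k) = Σ_{m=k}^{N} d_μ(m−k) a(m)` and
`v(k) = Σ_{0 ≤ l ≤ n, 0 ≤ lμ+k ≤ N} (−1)^l C(n,l) b(lμ+k)` for `−μn ≤ k ≤ −1`, one has, for every
sequence `ζ : ℤ → ℂ^T`,
`Σ_{k=0}^{N} a(k)ᵀ ζ(k) = Σ_{k=0}^{N} b(k)ᵀ ζ^{(n)}(k,μ) − Σ_{k=−μn}^{−1} v(k)ᵀ ζ(k)`,
where `ζ^{(n)}(k,μ) = Σ_{l=0}^{n} (−1)^l C(n,l) ζ(k − lμ)`. -/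
theorem functional_decomposition (n μ N T : ℕ) (hn : 1 ≤ n) (hμ : 1 ≤ μ) (hT : 1 ≤ T)
    (d : ℕ → ℂ)
    (hd : PowerSeries.mk d
        = (PowerSeries.mk (fun j => if μ ∣ j then (1 : ℂ) else 0)) ^ n)
    (a b : ℕ → Fin T → ℂ)
    (hb : ∀ k, k ≤ N → b k = ∑ m ∈ Finset.Icc k N, d (m - k) • a m)
    (v : ℤ → Fin T → ℂ)
    (hv : ∀ k : ℤ, -((μ : ℤ) * n) ≤ k → k ≤ -1 →
      v k = ∑ l ∈ (Finset.range (n + 1)).filter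
              (fun l : ℕ => 0 ≤ (l : ℤ) * μ + k ∧ (l : ℤ) * μ + k ≤ (N : ℤ)),
            ((-1 : ℂ) ^ l * (n.choose l : ℂ)) • b ((((l : ℤ)) * μ + k).toNat))
    (ζ : ℤ → Fin T → ℂ) :
    ∑ k ∈ Finset.range (N + 1), dotProduct (a k) (ζ (k : ℤ))
      = ∑ k ∈ Finset.range (N + 1),
          dotProduct (b k)
            (∑ l ∈ Finset.range (n + 1),
              ((-1 : ℂ) ^ l * (n.choose l : ℂ)) • ζ ((k : ℤ) - (l : ℤ) * μ))
        - ∑ k ∈ Finset.Ico (-((μ : ℤ) * n)) 0, dotProduct (v k) (ζ k) :=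
  functional_decomposition_general (dotProductBilin ℂ ℂ) (Nat.one_le_iff_ne_zero.mp hμ) hd hb hv ζ
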